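/- Let {n_k} be a sequence of positive integers with sup_k V(n_k) = ∞ and let Φ: ℕ₊ → [1,∞) be nondecreasing with Φ(n) → ∞ and limsup_k V(n_k)^2/Φ(n_k) = ∞. Then there exists a martingale F ∈ H_{1/2}(G) such that sup_k ‖σ_{n_k} F / Φ(n_k)‖_{L_{1/2}} = ∞. -/

import Mathlib

open MeasureTheory Filter Topology ENNReal NNReal

noncomputable section

/-- The dyadic group `G = (ℤ/2)^ℕ`. -/
abbrev G : Type := ℕ → ZMod 2

instance : TopologicalSpace (ZMod 2) := ⊥
instance : DiscreteTopology (ZMod 2) := ⟨rfl⟩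
instance : MeasurableSpace G := borel G
instance : BorelSpace G := ⟨rfl⟩

/-- Normalized Haar measure on `G`. -/
def μG : Measure G := Measure.addHaarMeasure ⟨⟨Set.univ, isCompact_univ⟩, by simp⟩

/-- Cylinder `I_n(x) = {y : y_0 = x_0, ..., y_{n-1} = x_{n-1}}`. -/
def cyl (n : ℕ) (x : G) : Set G := {y | ∀ k < n, y k = x k}

/-- `I_n = I_n(0)`. -/
def I₀ (n : ℕ) : Set G := cyl n 0

/-- `e t`: the element of `G` with a single 1 in coordinate `t`. -/
def e (t : ℕ) : G := fun k => if k = t then 1 else 0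

/-- Rademacher functions `r_k(x) = (-1)^{x_k}`. -/
def rade (k : ℕ) (x : G) : ℝ := (-1 : ℝ) ^ (x k).val

/-- Walsh functions `w_n = ∏ r_k^{n_k}` (binary digits `n_k` of `n`). -/
def walsh (n : ℕ) (x : G) : ℝ :=
  ∏ k ∈ Finset.range (n + 1), if n.testBit k then rade k x else 1

/-- Walsh–Dirichlet kernel `D_n = ∑_{k<n} w_k`. -/
def D (n : ℕ) (x : G) : ℝ := ∑ k ∈ Finset.range n, walsh k x

/-- Walsh–Fejér kernel `K_n = (1/n) ∑_{k=1}^n D_k`. -/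
def K (n : ℕ) (x : G) : ℝ := (1 / n) * ∑ k ∈ Finset.Icc 1 n, D k x

/-- Binary variation `V(n) = n_0 + ∑_{k≥1} |n_k - n_{k-1}|`. -/
def V (n : ℕ) : ℕ :=
  (if n.testBit 0 then 1 else 0) +
    ∑ k ∈ Finset.Icc 1 (n + 1), if n.testBit k ≠ n.testBit (k - 1) then 1 else 0

/-- `|n|`: index of the highest nonzero binary digit of `n`. -/
def hi (n : ℕ) : ℕ := Nat.log 2 n

/-- `[n]`: index of the lowest nonzero binary digit of `n`. -/
def lo (n : ℕ) : ℕ := padicValNat 2 n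

/-- `d(n) = |n| - [n]`. -/
def dd (n : ℕ) : ℕ := hi n - lo n

/-- A dyadic martingale: `F n` depends only on the first `n` coordinates, and
`F n` is the average of the two possible extensions, i.e. the martingale property
with respect to the dyadic filtration. -/
def IsDyadicMartingale (F : ℕ → G → ℝ) : Prop :=
  (∀ n x y, (∀ k < n, x k = y k) → F n x = F n y) ∧
  (∀ n x, F n x = (F (n+1) x + F (n+1) (Function.update x n (x n + 1))) / 2)

/-- `k`-th Walsh–Fourier coefficient of a martingale,
`F̂(k) = lim_n ∫ F_n w_k dμ` (the integrals are eventually constant). -/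
def mcoeff (F : ℕ → G → ℝ) (k : ℕ) : ℝ := ∫ x, F (k+1) x * walsh k x ∂μG

/-- Partial sums `S_m F` of the Walsh–Fourier series of a martingale. -/
def S (F : ℕ → G → ℝ) (m : ℕ) (x : G) : ℝ := ∑ j ∈ Finset.range m, mcoeff F j * walsh j x

/-- Fejér means `σ_n F = (1/n) ∑_{k=1}^n S_k F`. -/
def σ (F : ℕ → G → ℝ) (n : ℕ) (x : G) : ℝ := (1 / n) * ∑ k ∈ Finset.Icc 1 n, S F k x

/-- `H_p` quasi-norm of a martingale: `‖sup_n |F_n|‖_{L_p}`. -/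
def HpNorm (p : ℝ) (F : ℕ → G → ℝ) : ℝ≥0∞ :=
  (∫⁻ x, (⨆ n, (‖F n x‖₊ : ℝ≥0∞)) ^ p ∂μG) ^ (1 / p)

/-- Membership in the martingale Hardy space `H_p(G)`. -/
def MemHp (p : ℝ) (F : ℕ → G → ℝ) : Prop := IsDyadicMartingale F ∧ HpNorm p F < ⊤

/-- `L_p` quasi-norm of a function on `G`. -/
def LpN (p : ℝ) (f : G → ℝ) : ℝ≥0∞ := (∫⁻ x, (‖f x‖₊ : ℝ≥0∞) ^ p ∂μG) ^ (1 / p)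

/-- Weak `L_p` quasi-norm: `‖f‖_{L_{p,∞}} = sup_{λ>0} λ μ(|f|>λ)^{1/p}`. -/
def wLp (p : ℝ) (f : G → ℝ) : ℝ≥0∞ :=
  ⨆ t : ℝ≥0, (t : ℝ≥0∞) * (μG {x | (t : ℝ) < |f x|}) ^ (1 / p)

/-- Walsh–Fourier coefficient of an integrable function. -/
def fcoeff (f : G → ℝ) (j : ℕ) : ℝ := ∫ x, f x * walsh j x ∂μG

/-- Partial sums of the Walsh–Fourier series of a function. -/
def Sf (f : G → ℝ) (m : ℕ) (x : G) : ℝ := ∑ j ∈ Finset.range m, fcoeff f j * walsh j x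

/-- Fejér means of the Walsh–Fourier series of a function. -/
def σf (f : G → ℝ) (n : ℕ) (x : G) : ℝ := (1 / n) * ∑ k ∈ Finset.Icc 1 n, Sf f k x

/-- The martingale `(S_{2^m} g)_m` generated by a function `g`; used to interpret the
`H_p` norm of a function such as `σ_n F`. -/
def funMart (g : G → ℝ) : ℕ → G → ℝ := fun m => Sf g (2 ^ m)

/-- Modulus of continuity in `H_p`: `ω_{H_p}(1/2^n, F) = ‖F - S_{2^n} F‖_{H_p}`,
where `F - S_{2^n}F` is the martingale with `m`-th term `F_m - S_{min(2^n, 2^m)}F`. -/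
def ωHp (p : ℝ) (n : ℕ) (F : ℕ → G → ℝ) : ℝ≥0∞ :=
  HpNorm p (fun m x => F m x - S F (min (2 ^ n) (2 ^ m)) x)

/-- The a.e. limit of a martingale (as a limsup, which agrees a.e. with the limit
for martingales in `H_p`). -/
def mLim (F : ℕ → G → ℝ) (x : G) : ℝ := Filter.limsup (fun m => F m x) Filter.atTop

/-- The set `E_l := I_{l+1}(e_{l-1} + e_l)`, with the convention
`I_1(e_{-1}+e_0) = I_2(e_0+e_1)` for `l = 0`. -/
def Eset (l : ℕ) : Set G :=
  if l = 0 then cyl 2 (e 0 + e 1) else cyl (l + 1) (e (l - 1) + e l)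

/-!
A gliding hump. The martingale is a lacunary sum of dyadic blocks
`c_N (D_{2^{N+1}} - D_{2^N}) = c_N r_N D_{2^N}`. If `n = 2^N + m` with `m < 2^N`, then `n σ_n F`
equals `c_N r_N · m K_m` up to an error controlled by the blocks below `N` alone, so it suffices to
bound `‖m K_m‖_{1/2}` from below. On the set `E_{p+1}` the values of `D_1 + ⋯ + D_m` can be computed
exactly, and whenever a block of binary ones of `m` begins at the digit `p + 1` their modulus is at
least `4^p / 4`. Since `μ(E_{p+1}) = 2^{-p-2}` and these sets are disjoint, every such block adds
a fixed amount to `∫ |m K_m|^{1/2}`, whence `‖m K_m‖_{1/2} ≥ c V(n)² - C`. As `|n_k|` must be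
unbounded along any subsequence on which `V(n_k)² / Φ(n_k) → ∞`, the scales of the humps can be
chosen one after the other, each so far out that the kernel bound beats all the earlier blocks.
-/

/-! ### Walsh functions and Dirichlet kernels -/

lemma rade_add (k : ℕ) (x y : G) : rade k (x + y) = rade k x * rade k y := by
  rw [rade, Pi.add_apply, ZMod.val_add, ← neg_one_pow_eq_pow_mod_two, pow_add]; rfl

lemma rade_e (k t : ℕ) : rade k (e t) = if k = t then -1 else 1 := by
  by_cases h : k = t <;> simp [rade, e, h, ZMod.val_one]

lemma rade_of_eq_zero {k : ℕ} {x : G} (h : x k = 0) : rade k x = 1 := by simp [rade, h]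

lemma rade_of_eq_one {k : ℕ} {x : G} (h : x k = 1) : rade k x = -1 := by
  simp [rade, h, ZMod.val_one]

lemma abs_rade (k : ℕ) (x : G) : |rade k x| = 1 := by simp [rade]

lemma continuous_rade (k : ℕ) : Continuous (rade k) :=
  (continuous_of_discreteTopology (f := fun a : ZMod 2 => (-1 : ℝ) ^ a.val)).comp
    (continuous_apply k)

lemma walsh_add (n : ℕ) (x y : G) : walsh n (x + y) = walsh n x * walsh n y := by
  rw [walsh, walsh, walsh, ← Finset.prod_mul_distrib]
  refine Finset.prod_congr rfl fun k _ => ?_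
  split_ifs <;> simp [rade_add]

lemma walsh_e (n t : ℕ) : walsh n (e t) = if n.testBit t then -1 else 1 := by
  rw [walsh, Finset.prod_eq_single t (fun k _ hk => by simp [rade_e, hk]), rade_e, if_pos rfl]
  intro ht
  have hlt : n < 2 ^ t := Nat.lt_two_pow_self.trans_le
    (Nat.pow_le_pow_right two_pos (by simp only [Finset.mem_range] at ht; omega))
  simp [Nat.testBit_lt_two_pow hlt]

lemma abs_walsh (n : ℕ) (x : G) : |walsh n x| = 1 := by
  rw [walsh, Finset.abs_prod]
  refine Finset.prod_eq_one fun k _ => ?_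
  split_ifs <;> simp [abs_rade]

lemma continuous_walsh (n : ℕ) : Continuous (walsh n) := by
  refine continuous_finsetProd _ fun k _ => ?_
  split_ifs
  exacts [continuous_rade k, continuous_const]

lemma walsh_eq_prod_range {n N : ℕ} (hn : n < 2 ^ N) (x : G) :
    walsh n x = ∏ k ∈ Finset.range N, if n.testBit k then rade k x else 1 := by
  have extend {A B : ℕ} (hAB : A ≤ B) (hA : n < 2 ^ A) :
      ∏ k ∈ Finset.range A, (if n.testBit k then rade k x else 1) =
        ∏ k ∈ Finset.range B, if n.testBit k then rade k x else 1 := by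
    refine Finset.prod_subset (Finset.range_mono hAB) fun k _ hk => ?_
    have hlt : n < 2 ^ k := hA.trans_le (Nat.pow_le_pow_right two_pos (by simpa using hk))
    simp [Nat.testBit_lt_two_pow hlt]
  rcases le_total (n + 1) N with h | h
  · exact extend h (n.lt_succ_self.trans Nat.lt_two_pow_self)
  · exact (extend h hn).symm

lemma walsh_two_pow_add {r j : ℕ} (hj : j < 2 ^ r) (x : G) :
    walsh (2 ^ r + j) x = rade r x * walsh j x := by
  rw [walsh_eq_prod_range (N := r + 1) (by rw [pow_succ]; omega), walsh_eq_prod_range hj,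
    Finset.prod_range_succ, mul_comm]
  congr 1
  · simp [Nat.testBit_two_pow_add_eq, Nat.testBit_lt_two_pow hj]
  · refine Finset.prod_congr rfl fun k hk => ?_
    rw [Nat.testBit_two_pow_add_gt (Finset.mem_range.1 hk)]

lemma walsh_congr {n N : ℕ} (hn : n < 2 ^ N) {x y : G} (hxy : ∀ k < N, x k = y k) :
    walsh n x = walsh n y := by
  rw [walsh_eq_prod_range hn, walsh_eq_prod_range hn]
  refine Finset.prod_congr rfl fun k hk => ?_
  rw [rade, rade, hxy k (Finset.mem_range.1 hk)]

lemma walsh_eq_one {n N : ℕ} (hn : n < 2 ^ N) {x : G} (hx : x ∈ I₀ N) : walsh n x = 1 := by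
  rw [walsh_congr hn hx]
  refine Finset.prod_eq_one fun k _ => ?_
  rw [rade_of_eq_zero rfl, ite_self]

instance : IsProbabilityMeasure μG :=
  ⟨Measure.addHaarMeasure_self (K₀ := ⟨⟨Set.univ, isCompact_univ⟩, by simp⟩)⟩

instance : μG.IsAddLeftInvariant := by unfold μG; infer_instance

lemma integral_walsh_mul_walsh (j k : ℕ) :
    ∫ x, walsh j x * walsh k x ∂μG = if j = k then 1 else 0 := by
  split_ifs with h
  · subst h
    simp [← abs_mul_abs_self (walsh j _), abs_walsh]
  · obtain ⟨t, ht⟩ := Nat.exists_testBit_ne_of_ne h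
    have translate (x : G) :
        walsh j (e t + x) * walsh k (e t + x) = -(walsh j x * walsh k x) := by
      rw [walsh_add, walsh_add, walsh_e, walsh_e]
      cases hj : j.testBit t <;> cases hk : k.testBit t <;> simp [hj, hk] at ht ⊢
    have invariance := integral_add_left_eq_self (μ := μG) (fun x => walsh j x * walsh k x) (e t)
    simp only [translate, integral_neg] at invariance
    linarith

lemma integrable_of_continuous {f : G → ℝ} (hf : Continuous f) : Integrable f μG :=
  hf.integrable_of_hasCompactSupport (HasCompactSupport.of_compactSpace f)

lemma D_two_pow_add {r q : ℕ} (hq : q ≤ 2 ^ r) (x : G) :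
    D (2 ^ r + q) x = D (2 ^ r) x + rade r x * D q x := by
  rw [D, Finset.sum_range_add, D, D, Finset.mul_sum]
  congr 1
  exact Finset.sum_congr rfl fun j hj =>
    walsh_two_pow_add ((Finset.mem_range.1 hj).trans_le hq) x

lemma D_two_pow_eq_prod (N : ℕ) (x : G) :
    D (2 ^ N) x = ∏ k ∈ Finset.range N, (1 + rade k x) := by
  induction N with
  | zero => simp [D, walsh]
  | succ N ih => rw [pow_succ, mul_two, D_two_pow_add le_rfl, Finset.prod_range_succ, ← ih]; ring

lemma D_of_mem_I₀ {n N : ℕ} (hn : n ≤ 2 ^ N) {x : G} (hx : x ∈ I₀ N) : D n x = n := by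
  rw [D, Finset.sum_congr rfl fun j hj => walsh_eq_one ((Finset.mem_range.1 hj).trans_le hn) hx]
  simp

lemma D_two_pow_eq_zero {k N : ℕ} (hk : k < N) {x : G} (hx : x k = 1) : D (2 ^ N) x = 0 := by
  rw [D_two_pow_eq_prod]
  exact Finset.prod_eq_zero (Finset.mem_range.2 hk) (by rw [rade_of_eq_one hx, add_neg_cancel])

lemma D_two_pow (N : ℕ) : D (2 ^ N) = (I₀ N).indicator fun _ => (2 : ℝ) ^ N := by
  ext x
  by_cases hx : x ∈ I₀ N
  · rw [Set.indicator_of_mem hx, D_of_mem_I₀ le_rfl hx, Nat.cast_pow, Nat.cast_ofNat]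
  · rw [Set.indicator_of_notMem hx]
    simp only [I₀, cyl, Set.mem_ofPred_eq, not_forall] at hx
    obtain ⟨k, hk, hxk⟩ := hx
    exact D_two_pow_eq_zero hk (Fin.eq_one_of_ne_zero _ hxk)

lemma continuous_D (n : ℕ) : Continuous (D n) :=
  continuous_finsetSum _ fun k _ => continuous_walsh k

lemma measurableSet_cyl (n : ℕ) (x : G) : MeasurableSet (cyl n x) := by
  have hcyl : cyl n x = ⋂ k ∈ Finset.range n, (fun y : G => y k) ⁻¹' {x k} := by
    ext y; simp [cyl]
  rw [hcyl]
  exact (isClosed_biInter fun k _ =>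
    (isClosed_discrete _).preimage (continuous_apply k)).measurableSet

-- The Dirichlet kernel `D_{2^n} = 2^n 1_{I_n}` has integral `1`.
lemma measure_I₀ (n : ℕ) : μG (I₀ n) = 2⁻¹ ^ n := by
  have integral_D : ∫ x, D (2 ^ n) x ∂μG = 1 := by
    have walsh_zero (x : G) : walsh 0 x = 1 := by simp [walsh]
    have integral_walsh (j : ℕ) : ∫ x, walsh j x ∂μG = if j = 0 then 1 else 0 := by
      simpa only [walsh_zero, mul_one] using integral_walsh_mul_walsh j 0
    simp only [D]
    rw [integral_finsetSum _ fun j _ => integrable_of_continuous (continuous_walsh j)]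
    simp [integral_walsh]
  rw [D_two_pow, integral_indicator_const _ (show MeasurableSet (I₀ n) from measurableSet_cyl n 0),
    smul_eq_mul] at integral_D
  rw [← ofReal_measureReal, eq_inv_of_mul_eq_one_left integral_D,
    ENNReal.ofReal_inv_of_pos (by positivity), ENNReal.ofReal_pow (by norm_num), ENNReal.inv_pow]
  norm_num

lemma measure_cyl (n : ℕ) (x : G) : μG (cyl n x) = 2⁻¹ ^ n := by
  have translate : cyl n x = (fun y => x + y) ⁻¹' I₀ n := by
    ext y
    simp [I₀, cyl, CharTwo.add_eq_zero, eq_comm]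
  rw [translate, measure_preimage_add, measure_I₀]

/-! ### Fejér kernels on the sets `E_{p+1}` -/

/-- The unnormalized Fejér kernel `n K_n = D_1 + ⋯ + D_n`. -/
def fejerSum (n : ℕ) (x : G) : ℝ := ∑ k ∈ Finset.range n, D (k + 1) x

lemma continuous_fejerSum (n : ℕ) : Continuous (fejerSum n) :=
  continuous_finsetSum _ fun k _ => continuous_D (k + 1)

lemma fejerSum_two_pow_add {r q : ℕ} (hq : q ≤ 2 ^ r) (x : G) :
    fejerSum (2 ^ r + q) x =
      fejerSum (2 ^ r) x + (q * D (2 ^ r) x + rade r x * fejerSum q x) := by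
  rw [fejerSum, Finset.sum_range_add, fejerSum, fejerSum, Finset.mul_sum]
  congr 1
  calc ∑ j ∈ Finset.range q, D (2 ^ r + j + 1) x
      = ∑ j ∈ Finset.range q, (D (2 ^ r) x + rade r x * D (j + 1) x) :=
        Finset.sum_congr rfl fun j hj =>
          D_two_pow_add ((Nat.succ_le_of_lt (Finset.mem_range.1 hj)).trans hq) x
    _ = _ := by simp [Finset.sum_add_distrib]

lemma fejerSum_two_pow_succ (r : ℕ) (x : G) :
    fejerSum (2 ^ (r + 1)) x = (1 + rade r x) * fejerSum (2 ^ r) x + 2 ^ r * D (2 ^ r) x := by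
  rw [pow_succ, mul_two, fejerSum_two_pow_add le_rfl]
  push_cast
  ring

lemma fejerSum_of_mem_I₀ {n N : ℕ} (hn : n ≤ 2 ^ N) {x : G} (hx : x ∈ I₀ N) :
    fejerSum n x = n * (n + 1) / 2 := by
  induction n with
  | zero => simp [fejerSum]
  | succ n ih =>
    rw [fejerSum, Finset.sum_range_succ, ← fejerSum, ih (by omega), D_of_mem_I₀ hn hx]
    push_cast
    ring

lemma Eset_succ (p : ℕ) : Eset (p + 1) = cyl (p + 2) (e p + e (p + 1)) := by simp [Eset]

lemma measurableSet_Eset_succ (p : ℕ) : MeasurableSet (Eset (p + 1)) :=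
  Eset_succ p ▸ measurableSet_cyl _ _

lemma measure_Eset_succ (p : ℕ) : μG (Eset (p + 1)) = 2⁻¹ ^ (p + 2) := by
  rw [Eset_succ, measure_cyl]

lemma mem_Eset_succ_iff {p : ℕ} {x : G} :
    x ∈ Eset (p + 1) ↔ x ∈ I₀ p ∧ x p = 1 ∧ x (p + 1) = 1 := by
  simp only [Eset_succ, I₀, cyl, Set.mem_ofPred_eq, Nat.forall_lt_succ_right, and_assoc]
  refine and_congr (forall₂_congr fun k hk => ?_) (by simp [e])
  simp [e, hk.ne, (hk.trans p.lt_succ_self).ne]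

lemma disjoint_Eset_succ {p q : ℕ} (h : p ≠ q) : Disjoint (Eset (p + 1)) (Eset (q + 1)) := by
  wlog hpq : p < q generalizing p q
  · exact (this h.symm (h.lt_of_le' (not_lt.1 hpq))).symm
  refine Set.disjoint_left.2 fun x hp hq => ?_
  rw [mem_Eset_succ_iff] at hp hq
  exact one_ne_zero (hp.2.1.symm.trans (hq.1 p hpq))

lemma fejerSum_two_pow_eq_zero {p r : ℕ} (hr : p + 2 ≤ r) {x : G} (hx : x ∈ Eset (p + 1)) :
    fejerSum (2 ^ r) x = 0 := by
  obtain ⟨-, hxp, hxp'⟩ := mem_Eset_succ_iff.1 hx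
  induction r, hr using Nat.le_induction with
  | base =>
    rw [fejerSum_two_pow_succ, rade_of_eq_one hxp', D_two_pow_eq_zero p.lt_succ_self hxp]
    ring
  | succ r hr ih => rw [fejerSum_two_pow_succ, ih, D_two_pow_eq_zero (by omega) hxp]; ring

-- Adding a binary digit `2^r` with `r ≥ p + 2` only changes the sign of the sum on `E_{p+1}`.
lemma abs_fejerSum_mod_two_pow (n : ℕ) {p : ℕ} {x : G} (hx : x ∈ Eset (p + 1)) :
    |fejerSum (n % 2 ^ (p + 2)) x| = |fejerSum n x| := by
  suffices h : ∀ r, p + 2 ≤ r → |fejerSum (n % 2 ^ (p + 2)) x| = |fejerSum (n % 2 ^ r) x| by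
    have hn : n < 2 ^ (p + 2 + n) :=
      Nat.lt_two_pow_self.trans_le (Nat.pow_le_pow_right two_pos (by omega))
    rw [h _ (Nat.le_add_right _ n), Nat.mod_eq_of_lt hn]
  intro r hr
  induction r, hr using Nat.le_induction with
  | base => rfl
  | succ r hr ih =>
    rw [ih, Nat.mod_pow_succ, ← Nat.toNat_testBit, add_comm]
    cases n.testBit r
    · simp
    · rw [Bool.toNat_true, mul_one, fejerSum_two_pow_add (Nat.mod_lt _ (by positivity)).le,
        fejerSum_two_pow_eq_zero hr hx,
        D_two_pow_eq_zero (by omega) (mem_Eset_succ_iff.1 hx).2.1]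
      simp [abs_mul, abs_rade]

lemma fejerSum_two_pow_succ_add {p q : ℕ} (hq : q ≤ 2 ^ p) {x : G} (hx : x ∈ Eset (p + 1)) :
    fejerSum (2 ^ (p + 1) + q) x = 4 ^ p - q * (q + 1) / 2 := by
  obtain ⟨hI, hxp, hxp'⟩ := mem_Eset_succ_iff.1 hx
  rw [fejerSum_two_pow_add (by rw [pow_succ]; omega), fejerSum_two_pow_succ,
    rade_of_eq_one hxp, rade_of_eq_one hxp', D_two_pow_eq_zero p.lt_succ_self hxp,
    D_of_mem_I₀ le_rfl hI, fejerSum_of_mem_I₀ hq hI,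
    show (4 : ℝ) ^ p = 2 ^ p * 2 ^ p by rw [← mul_pow]; norm_num]
  push_cast
  ring

/-! ### Binary variation and the lower bound for the Fejér kernel -/

lemma sum_changes_add_toNat (b : ℕ → Bool) (L : ℕ) :
    ∑ k ∈ Finset.range L, (if b (k + 1) ≠ b k then 1 else 0) + (b L).toNat =
      (b 0).toNat +
        2 * ((Finset.range L).filter fun p => b p = false ∧ b (p + 1) = true).card := by
  induction L with
  | zero => simp
  | succ L ih =>
    rw [Finset.sum_range_succ, Finset.range_add_one, Finset.filter_insert]
    cases h0 : b L <;> cases h1 : b (L + 1) <;> grind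

/-- The set of `p` such that a block of ones in the binary expansion of `n` begins at the digit
`p + 1`. A block beginning at the digit `0` is not recorded. -/
def ascents (n : ℕ) : Finset ℕ :=
  (Finset.range (n + 1)).filter fun p => n.testBit p = false ∧ n.testBit (p + 1) = true

lemma mem_ascents {n p : ℕ} :
    p ∈ ascents n ↔ n.testBit p = false ∧ n.testBit (p + 1) = true := by
  rw [ascents, Finset.mem_filter, Finset.mem_range, and_iff_right_iff_imp]
  intro h
  have : p + 1 < 2 ^ (p + 1) := Nat.lt_two_pow_self
  have := Nat.ge_two_pow_of_testBit h.2
  omega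

lemma V_eq_card_ascents (n : ℕ) :
    V n = 2 * (n.testBit 0).toNat + 2 * (ascents n).card := by
  have changes := sum_changes_add_toNat n.testBit (n + 1)
  have high : n.testBit (n + 1) = false :=
    Nat.testBit_lt_two_pow (n.lt_succ_self.trans Nat.lt_two_pow_self)
  have shift : ∑ k ∈ Finset.Icc 1 (n + 1), (if n.testBit k ≠ n.testBit (k - 1) then 1 else 0) =
      ∑ k ∈ Finset.range (n + 1), if n.testBit (k + 1) ≠ n.testBit k then 1 else 0 := by
    rw [← Finset.Ico_add_one_right_eq_Icc, Finset.sum_Ico_eq_sum_range]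
    simp [add_comm 1]
  rw [high, Bool.toNat_false, add_zero] at changes
  rw [V, shift, changes, ascents]
  cases n.testBit 0
  · simp
  · rw [if_pos rfl, Bool.toNat_true]
    ring

lemma lt_two_pow_hi_succ (n : ℕ) : n < 2 ^ (hi n + 1) := Nat.lt_pow_succ_log_self one_lt_two n

lemma card_ascents_le (n : ℕ) : (ascents n).card ≤ (ascents (n % 2 ^ hi n)).card + 1 := by
  refine (Finset.card_le_card fun p hp => ?_).trans (Finset.card_insert_le (hi n - 1) _)
  rw [Finset.mem_insert, mem_ascents]
  obtain ⟨h0, h1⟩ := mem_ascents.1 hp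
  have hlt : p + 1 < hi n + 1 := (Nat.pow_lt_pow_iff_right one_lt_two).1
    ((Nat.ge_two_pow_of_testBit h1).trans_lt (lt_two_pow_hi_succ n))
  rcases eq_or_ne p (hi n - 1) with htop | _
  · exact Or.inl htop
  · simp only [Nat.testBit_mod_two_pow, h0, h1, Bool.and_false, Bool.and_true, decide_eq_true_eq,
      true_and]
    omega

lemma V_le_card_ascents (n : ℕ) : V n ≤ 2 * (ascents (n % 2 ^ hi n)).card + 4 := by
  have := V_eq_card_ascents n
  have := card_ascents_le n
  have := (n.testBit 0).toNat_le
  omega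

lemma le_abs_fejerSum {n p : ℕ} (hp : p ∈ ascents n) {x : G} (hx : x ∈ Eset (p + 1)) :
    4 ^ p / 4 ≤ |fejerSum n x| := by
  obtain ⟨h0, h1⟩ := mem_ascents.1 hp
  have hq : n % 2 ^ p < 2 ^ p := Nat.mod_lt _ (by positivity)
  have hmod : n % 2 ^ (p + 2) = 2 ^ (p + 1) + n % 2 ^ p := by
    rw [Nat.mod_pow_succ, Nat.mod_pow_succ, ← Nat.toNat_testBit, ← Nat.toNat_testBit, h0, h1]
    simp [add_comm]
  rw [← abs_fejerSum_mod_two_pow n hx, hmod, fejerSum_two_pow_succ_add hq.le hx]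
  refine le_trans ?_ (le_abs_self _)
  have hq' : ((n % 2 ^ p : ℕ) : ℝ) + 1 ≤ 2 ^ p := by exact_mod_cast hq
  have h4 : (4 : ℝ) ^ p = 2 ^ p * 2 ^ p := by rw [← mul_pow]; norm_num
  rw [h4]
  nlinarith [Nat.cast_nonneg (α := ℝ) (n % 2 ^ p)]

lemma LpN_eq_eLpNorm {p : ℝ} (hp : 0 < p) (f : G → ℝ) :
    LpN p f = eLpNorm f (ENNReal.ofReal p) μG := by
  rw [eLpNorm_eq_lintegral_rpow_enorm_toReal (by simpa) (by simp), ENNReal.toReal_ofReal hp.le]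
  rfl

lemma card_ascents_div_le_lintegral (n : ℕ) :
    ((ascents n).card : ℝ≥0∞) / 8 ≤ ∫⁻ x, ‖fejerSum n x‖ₑ ^ (1 / 2 : ℝ) ∂μG := by
  have pointwise {p : ℕ} (hp : p ∈ ascents n) (x : G) (hx : x ∈ Eset (p + 1)) :
      (2 : ℝ≥0∞) ^ p * 2⁻¹ ≤ ‖fejerSum n x‖ₑ ^ (1 / 2 : ℝ) := by
    rw [one_div, ENNReal.le_rpow_inv_iff two_pos, Real.enorm_eq_ofReal_abs]
    convert ENNReal.ofReal_le_ofReal (le_abs_fejerSum hp hx) using 1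
    rw [ENNReal.ofReal_div_of_pos four_pos, ENNReal.ofReal_pow four_pos.le, ENNReal.rpow_two,
      div_eq_mul_inv, mul_pow, ← ENNReal.inv_pow, pow_right_comm]
    norm_num
  have mass (p : ℕ) : (2 : ℝ≥0∞) ^ p * 2⁻¹ * μG (Eset (p + 1)) = 8⁻¹ := by
    calc (2 : ℝ≥0∞) ^ p * 2⁻¹ * μG (Eset (p + 1)) = (2 * 2⁻¹) ^ p * 2⁻¹ ^ 3 := by
          rw [measure_Eset_succ]; ring
      _ = 8⁻¹ := by
          rw [ENNReal.mul_inv_cancel two_ne_zero ofNat_ne_top, one_pow, one_mul, ← ENNReal.inv_pow]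
          norm_num
  calc ((ascents n).card : ℝ≥0∞) / 8
      = ∑ p ∈ ascents n, (2 : ℝ≥0∞) ^ p * 2⁻¹ * μG (Eset (p + 1)) := by
        simp only [mass, Finset.sum_const, nsmul_eq_mul, div_eq_mul_inv]
    _ ≤ ∑ p ∈ ascents n, ∫⁻ x in Eset (p + 1), ‖fejerSum n x‖ₑ ^ (1 / 2 : ℝ) ∂μG :=
        Finset.sum_le_sum fun p hp => by
          rw [← setLIntegral_const]
          exact setLIntegral_mono' (measurableSet_Eset_succ p) (pointwise hp)
    _ = ∫⁻ x in ⋃ p ∈ ascents n, Eset (p + 1), ‖fejerSum n x‖ₑ ^ (1 / 2 : ℝ) ∂μG :=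
        (lintegral_biUnion_finset (fun p _ q _ h => disjoint_Eset_succ h)
          (fun p _ => measurableSet_Eset_succ p) _).symm
    _ ≤ _ := setLIntegral_le_lintegral _ _

lemma sq_card_ascents_le (n : ℕ) :
    ((ascents n).card : ℝ≥0∞) ^ 2 ≤ 64 * LpN (1 / 2) (fejerSum n) := by
  have h := card_ascents_div_le_lintegral n
  rw [ENNReal.div_le_iff' (by simp) (by simp)] at h
  calc ((ascents n).card : ℝ≥0∞) ^ 2
      ≤ (8 * ∫⁻ x, ‖fejerSum n x‖ₑ ^ (1 / 2 : ℝ) ∂μG) ^ 2 := pow_le_pow_left' h 2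
    _ = 64 * LpN (1 / 2) (fejerSum n) := by
      rw [mul_pow, LpN, one_div_one_div, ENNReal.rpow_two]
      congr 1
      norm_num

lemma sq_V_le_LpN_fejerSum (n : ℕ) :
    (V n : ℝ≥0∞) ^ 2 ≤ 512 * LpN (1 / 2) (fejerSum (n % 2 ^ hi n)) + 32 := by
  set m := (ascents (n % 2 ^ hi n)).card
  have hV : V n ^ 2 ≤ 8 * m ^ 2 + 32 := by
    have := V_le_card_ascents n
    zify at *
    nlinarith [sq_nonneg ((m : ℤ) - 2)]
  calc (V n : ℝ≥0∞) ^ 2 ≤ 8 * (m : ℝ≥0∞) ^ 2 + 32 := by exact_mod_cast hV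
    _ ≤ 8 * (64 * LpN (1 / 2) (fejerSum (n % 2 ^ hi n))) + 32 := by
        gcongr; exact sq_card_ascents_le _
    _ = _ := by rw [← mul_assoc]; norm_num

/-! ### Martingales constant on dyadic blocks of frequencies -/

lemma update_add_one (x : G) (n : ℕ) : Function.update x n (x n + 1) = x + e n := by
  ext k
  by_cases h : k = n <;> simp [e, h]

/-- The dyadic martingale with prescribed Walsh–Fourier coefficients. -/
def walshMart (a : ℕ → ℝ) (n : ℕ) (x : G) : ℝ := ∑ j ∈ Finset.range (2 ^ n), a j * walsh j x

lemma sum_range_two_pow_add_walsh (a : ℕ → ℝ) {n q : ℕ} (hq : q ≤ 2 ^ n) (x : G) :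
    ∑ j ∈ Finset.range (2 ^ n + q), a j * walsh j x =
      walshMart a n x + rade n x * ∑ j ∈ Finset.range q, a (2 ^ n + j) * walsh j x := by
  rw [Finset.sum_range_add, walshMart, Finset.mul_sum]
  congr 1
  refine Finset.sum_congr rfl fun j hj => ?_
  rw [walsh_two_pow_add ((Finset.mem_range.1 hj).trans_le hq)]
  ring

lemma walshMart_succ (a : ℕ → ℝ) (n : ℕ) (x : G) :
    walshMart a (n + 1) x =
      walshMart a n x + rade n x * ∑ j ∈ Finset.range (2 ^ n), a (2 ^ n + j) * walsh j x := by
  rw [← sum_range_two_pow_add_walsh a le_rfl, ← mul_two, ← pow_succ, walshMart]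

lemma isDyadicMartingale_walshMart (a : ℕ → ℝ) : IsDyadicMartingale (walshMart a) := by
  refine ⟨fun n x y hxy => Finset.sum_congr rfl fun j hj => ?_, fun n x => ?_⟩
  · rw [walsh_congr (Finset.mem_range.1 hj) hxy]
  · have flip {j : ℕ} (hj : j < 2 ^ n) : walsh j (x + e n) = walsh j x := by
      rw [walsh_add, walsh_e, Nat.testBit_lt_two_pow hj]
      simp
    have low : walshMart a n (x + e n) = walshMart a n x :=
      Finset.sum_congr rfl fun j hj => by rw [flip (Finset.mem_range.1 hj)]
    have high : ∑ j ∈ Finset.range (2 ^ n), a (2 ^ n + j) * walsh j (x + e n) =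
        ∑ j ∈ Finset.range (2 ^ n), a (2 ^ n + j) * walsh j x :=
      Finset.sum_congr rfl fun j hj => by rw [flip (Finset.mem_range.1 hj)]
    rw [update_add_one, walshMart_succ, walshMart_succ, low, high, rade_add, rade_e, if_pos rfl]
    ring

lemma mcoeff_walshMart (a : ℕ → ℝ) (k : ℕ) : mcoeff (walshMart a) k = a k := by
  have hk : k < 2 ^ (k + 1) := k.lt_succ_self.trans Nat.lt_two_pow_self
  have integrable (j : ℕ) : Integrable (fun x => a j * (walsh j x * walsh k x)) μG :=
    integrable_of_continuous
      (continuous_const.mul ((continuous_walsh j).mul (continuous_walsh k)))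
  simp only [mcoeff, walshMart, Finset.sum_mul, mul_assoc]
  rw [integral_finsetSum _ fun j _ => integrable j]
  simp [integral_const_mul, integral_walsh_mul_walsh, hk]

lemma S_walshMart (a : ℕ → ℝ) (m : ℕ) (x : G) :
    S (walshMart a) m x = ∑ j ∈ Finset.range m, a j * walsh j x := by
  simp only [S, mcoeff_walshMart]

/-- The Walsh–Fourier coefficients that are equal to `c N` on the dyadic block
`2 ^ N ≤ j < 2 ^ (N + 1)`, and to `0` at `j = 0`. -/
def blockCoeff (c : ℕ → ℝ) (j : ℕ) : ℝ := if j = 0 then 0 else c (hi j)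

lemma blockCoeff_two_pow_add (c : ℕ → ℝ) {N j : ℕ} (hj : j < 2 ^ N) :
    blockCoeff c (2 ^ N + j) = c N := by
  have hpos : 2 ^ N + j ≠ 0 := (Nat.add_pos_left (Nat.two_pow_pos N) j).ne'
  rw [blockCoeff, if_neg hpos, hi, (Nat.log_eq_iff (Or.inr ⟨one_lt_two, hpos⟩)).2
    ⟨Nat.le_add_right _ _, by rw [pow_succ]; omega⟩]

lemma sum_blockCoeff_mul_walsh (c : ℕ → ℝ) {N q : ℕ} (hq : q ≤ 2 ^ N) (x : G) :
    ∑ j ∈ Finset.range (2 ^ N + q), blockCoeff c j * walsh j x =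
      walshMart (blockCoeff c) N x + c N * (rade N x * D q x) := by
  rw [sum_range_two_pow_add_walsh _ hq, Finset.sum_congr rfl fun j hj => congrArg (· * walsh j x)
    (blockCoeff_two_pow_add c ((Finset.mem_range.1 hj).trans_le hq)), ← Finset.mul_sum, ← D]
  ring

lemma walshMart_blockCoeff (c : ℕ → ℝ) (n : ℕ) (x : G) :
    walshMart (blockCoeff c) n x =
      ∑ N ∈ Finset.range n, c N * (rade N x * D (2 ^ N) x) := by
  induction n with
  | zero => simp [walshMart, blockCoeff]
  | succ n ih =>
    rw [walshMart, pow_succ, mul_two, sum_blockCoeff_mul_walsh c le_rfl, ih,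
      Finset.sum_range_succ]

lemma HpNorm_sum_range_lt_top {p : ℝ} (hp : 0 < p) (hp1 : p ≤ 1) {f : ℕ → G → ℝ}
    (hf : ∀ N, Measurable (f N)) (hsum : ∑' N, ∫⁻ x, ‖f N x‖ₑ ^ p ∂μG ≠ ⊤) :
    HpNorm p (fun n x => ∑ N ∈ Finset.range n, f N x) < ⊤ := by
  have pointwise (x : G) :
      (⨆ n, ‖∑ N ∈ Finset.range n, f N x‖ₑ) ^ p ≤ ∑' N, ‖f N x‖ₑ ^ p := by
    rw [← ENNReal.le_rpow_inv_iff hp]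
    refine iSup_le fun n => (ENNReal.le_rpow_inv_iff hp).2 ?_
    calc ‖∑ N ∈ Finset.range n, f N x‖ₑ ^ p
        ≤ (∑ N ∈ Finset.range n, ‖f N x‖ₑ) ^ p :=
          ENNReal.rpow_le_rpow (enorm_sum_le _ _) hp.le
      _ ≤ ∑ N ∈ Finset.range n, ‖f N x‖ₑ ^ p :=
          Finset.le_sum_of_subadditive (fun t : ℝ≥0∞ => t ^ p) (ENNReal.zero_rpow_of_pos hp).le
            (fun s t => ENNReal.rpow_add_le_add_rpow s t hp.le hp1) _ _
      _ ≤ _ := ENNReal.sum_le_tsum _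
  refine ENNReal.rpow_lt_top_of_nonneg (by positivity) (ne_top_of_le_ne_top hsum ?_)
  rw [← lintegral_tsum fun N => ((hf N).enorm.pow_const p).aemeasurable]
  exact lintegral_mono pointwise

lemma lintegral_enorm_block_rpow {p : ℝ} (hp : 0 < p) (c : ℝ) (N : ℕ) :
    ∫⁻ x, ‖c * (rade N x * D (2 ^ N) x)‖ₑ ^ p ∂μG = (‖c‖ₑ * 2 ^ N) ^ p * 2⁻¹ ^ N := by
  have indicator (x : G) : ‖c * (rade N x * D (2 ^ N) x)‖ₑ ^ p =
      (I₀ N).indicator (fun _ => (‖c‖ₑ * 2 ^ N) ^ p) x := by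
    have hrade : ‖rade N x‖ₑ = 1 := by simp [Real.enorm_eq_ofReal_abs, abs_rade]
    rw [enorm_mul, enorm_mul, hrade, one_mul, D_two_pow]
    by_cases hx : x ∈ I₀ N
    · simp [hx, Real.enorm_eq_ofReal]
    · simp [hx, ENNReal.zero_rpow_of_pos hp]
  simp_rw [indicator]
  rw [lintegral_indicator_const (show MeasurableSet (I₀ N) from measurableSet_cyl N 0),
    measure_I₀]

lemma memHp_walshMart_blockCoeff {p : ℝ} (hp : 0 < p) (hp1 : p ≤ 1) {c : ℕ → ℝ}
    (hc : ∑' N, (‖c N‖ₑ * 2 ^ N) ^ p * 2⁻¹ ^ N ≠ ⊤) : MemHp p (walshMart (blockCoeff c)) := by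
  refine ⟨isDyadicMartingale_walshMart _, ?_⟩
  simp_rw [← lintegral_enorm_block_rpow hp] at hc
  have hF : walshMart (blockCoeff c) =
      fun n x => ∑ N ∈ Finset.range n, c N * (rade N x * D (2 ^ N) x) :=
    funext₂ (walshMart_blockCoeff c)
  rw [hF]
  exact HpNorm_sum_range_lt_top hp hp1 (fun N =>
    (continuous_const.mul ((continuous_rade N).mul (continuous_D _))).measurable) hc

/-! ### Fejér means of block martingales -/

lemma sum_abs_blockCoeff (c : ℕ → ℝ) (N : ℕ) :
    ∑ j ∈ Finset.range (2 ^ N), |blockCoeff c j| = ∑ M ∈ Finset.range N, 2 ^ M * |c M| := by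
  induction N with
  | zero => simp [blockCoeff]
  | succ N ih =>
    rw [pow_succ, mul_two, Finset.sum_range_add, ih, Finset.sum_range_succ,
      Finset.sum_congr rfl fun j hj =>
        congrArg abs (blockCoeff_two_pow_add c (Finset.mem_range.1 hj))]
    simp

lemma abs_sum_blockCoeff_mul_walsh_le (c : ℕ → ℝ) {m N : ℕ} (hm : m ≤ 2 ^ N) (x : G) :
    |∑ j ∈ Finset.range m, blockCoeff c j * walsh j x| ≤
      ∑ M ∈ Finset.range N, 2 ^ M * |c M| :=
  calc |∑ j ∈ Finset.range m, blockCoeff c j * walsh j x|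
      ≤ ∑ j ∈ Finset.range m, |blockCoeff c j * walsh j x| := Finset.abs_sum_le_sum_abs _ _
    _ = ∑ j ∈ Finset.range m, |blockCoeff c j| := by simp only [abs_mul, abs_walsh, mul_one]
    _ ≤ ∑ j ∈ Finset.range (2 ^ N), |blockCoeff c j| :=
        Finset.sum_le_sum_of_subset_of_nonneg (Finset.range_mono hm) fun _ _ _ => abs_nonneg _
    _ = _ := sum_abs_blockCoeff c N

lemma σ_eq_sum_range (F : ℕ → G → ℝ) (n : ℕ) (x : G) :
    σ F n x = (1 / n) * ∑ k ∈ Finset.range n, S F (k + 1) x := by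
  rw [σ, ← Finset.Ico_add_one_right_eq_Icc, Finset.sum_Ico_eq_sum_range]
  simp only [Nat.add_sub_cancel, add_comm 1]

lemma σ_two_pow_add (c : ℕ → ℝ) {N m : ℕ} (hm : m ≤ 2 ^ N) (x : G) :
    ((2 ^ N + m : ℕ) : ℝ) * σ (walshMart (blockCoeff c)) (2 ^ N + m) x =
      ∑ k ∈ Finset.range (2 ^ N), S (walshMart (blockCoeff c)) (k + 1) x +
        m * walshMart (blockCoeff c) N x + c N * (rade N x * fejerSum m x) := by
  have hn : ((2 ^ N + m : ℕ) : ℝ) ≠ 0 := by positivity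
  have tail {k : ℕ} (hk : k < m) : S (walshMart (blockCoeff c)) (2 ^ N + k + 1) x =
      walshMart (blockCoeff c) N x + c N * (rade N x * D (k + 1) x) := by
    rw [S_walshMart, add_assoc, sum_blockCoeff_mul_walsh c (by omega)]
  rw [σ_eq_sum_range, one_div, mul_inv_cancel_left₀ hn, Finset.sum_range_add,
    Finset.sum_congr rfl fun _ hk => tail (Finset.mem_range.1 hk), Finset.sum_add_distrib,
    ← Finset.mul_sum, ← Finset.mul_sum, ← fejerSum]
  simp [add_assoc]

lemma two_pow_hi_add_mod {n : ℕ} (hn : n ≠ 0) : 2 ^ hi n + n % 2 ^ hi n = n := by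
  have hle : 2 ^ hi n ≤ n := Nat.pow_log_le_self 2 hn
  have hlt := lt_two_pow_hi_succ n
  rw [Nat.mod_eq_sub_mod hle, Nat.mod_eq_of_lt (by rw [pow_succ] at hlt; omega)]
  omega

lemma abs_σ_walshMart_sub_le (c : ℕ → ℝ) {n : ℕ} (hn : n ≠ 0) (x : G) :
    |σ (walshMart (blockCoeff c)) n x -
      c (hi n) / n * (rade (hi n) x * fejerSum (n % 2 ^ hi n) x)| ≤
        ∑ M ∈ Finset.range (hi n), 2 ^ M * |c M| := by
  have hm : n % 2 ^ hi n ≤ 2 ^ hi n := (Nat.mod_lt n (Nat.two_pow_pos _)).le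
  have hn' : (0 : ℝ) < n := by positivity
  have hnm : ((2 ^ hi n : ℕ) : ℝ) + (n % 2 ^ hi n : ℕ) = n := by
    rw [← Nat.cast_add, two_pow_hi_add_mod hn]
  have decomposition := σ_two_pow_add c hm x
  rw [two_pow_hi_add_mod hn] at decomposition
  set N := hi n
  set m := n % 2 ^ N
  set B := ∑ M ∈ Finset.range N, 2 ^ M * |c M|
  set early := ∑ k ∈ Finset.range (2 ^ N), S (walshMart (blockCoeff c)) (k + 1) x
  have early_le : |early| ≤ (2 ^ N : ℕ) * B := by
    calc |early| ≤ ∑ k ∈ Finset.range (2 ^ N), |S (walshMart (blockCoeff c)) (k + 1) x| :=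
          Finset.abs_sum_le_sum_abs _ _
      _ ≤ ∑ _k ∈ Finset.range (2 ^ N), B := Finset.sum_le_sum fun k hk => by
          rw [S_walshMart]
          exact abs_sum_blockCoeff_mul_walsh_le c (Finset.mem_range.1 hk) x
      _ = _ := by simp
  have mart_le : |m * walshMart (blockCoeff c) N x| ≤ m * B := by
    rw [abs_mul, Nat.abs_cast]
    gcongr
    exact abs_sum_blockCoeff_mul_walsh_le c le_rfl x
  have difference : σ (walshMart (blockCoeff c)) n x - c N / n * (rade N x * fejerSum m x) =
      (early + m * walshMart (blockCoeff c) N x) / n := by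
    field_simp
    linarith
  rw [difference, abs_div, Nat.abs_cast, div_le_iff₀ hn', ← hnm, mul_add, mul_comm B, mul_comm B]
  exact (abs_add_le _ _).trans (add_le_add early_le mart_le)

lemma continuous_σ (F : ℕ → G → ℝ) (n : ℕ) : Continuous (σ F n) :=
  continuous_const.mul <| continuous_finsetSum _ fun _ _ => continuous_finsetSum _ fun j _ =>
    continuous_const.mul (continuous_walsh j)

lemma LpN_half_sub_le {f g : G → ℝ} (hf : Continuous f) (hg : Continuous g) :
    LpN (1 / 2) (f - g) ≤ 2 * (LpN (1 / 2) f + LpN (1 / 2) g) := by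
  have constant : LpAddConst (ENNReal.ofReal (1 / 2)) = 2 := by
    have hmem : ENNReal.ofReal (1 / 2) ∈ Set.Ioo 0 1 := ⟨by simp, by simp⟩
    rw [LpAddConst, if_pos hmem, ENNReal.toReal_ofReal (by norm_num)]
    norm_num
  have half_pos : (0 : ℝ) < 1 / 2 := by norm_num
  rw [LpN_eq_eLpNorm half_pos, LpN_eq_eLpNorm half_pos, LpN_eq_eLpNorm half_pos, ← constant]
  exact eLpNorm_sub_le' hf.aestronglyMeasurable hg.aestronglyMeasurable _

lemma LpN_const_mul {p : ℝ} (hp : 0 < p) (c : ℝ) (f : G → ℝ) :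
    LpN p (fun x => c * f x) = ‖c‖ₑ * LpN p f := by
  rw [LpN_eq_eLpNorm hp, LpN_eq_eLpNorm hp]
  exact eLpNorm_const_smul c f _ μG

lemma LpN_le_of_abs_le {p : ℝ} (hp : 0 < p) {f : G → ℝ} {B : ℝ} (h : ∀ x, |f x| ≤ B) :
    LpN p f ≤ ENNReal.ofReal B := by
  rw [LpN_eq_eLpNorm hp]
  simpa using eLpNorm_le_of_ae_bound (p := ENNReal.ofReal p) (μ := μG) (.of_forall h)

lemma LpN_rade_mul (p : ℝ) (k : ℕ) (f : G → ℝ) : LpN p (fun x => rade k x * f x) = LpN p f := by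
  have hrade (x : G) : ‖rade k x‖₊ = 1 := by simp [rade]
  simp only [LpN, nnnorm_mul, hrade, one_mul]

lemma enorm_mul_LpN_fejerSum_le (c : ℕ → ℝ) {n : ℕ} (hn : n ≠ 0) :
    ‖c (hi n)‖ₑ * LpN (1 / 2) (fejerSum (n % 2 ^ hi n)) ≤
      n * (2 * (LpN (1 / 2) (σ (walshMart (blockCoeff c)) n) +
        ENNReal.ofReal (∑ M ∈ Finset.range (hi n), 2 ^ M * |c M|))) := by
  set F := walshMart (blockCoeff c)
  set block : G → ℝ := fun x => c (hi n) / n * (rade (hi n) x * fejerSum (n % 2 ^ hi n) x)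
  have half_pos : (0 : ℝ) < 1 / 2 := by norm_num
  have continuous_block : Continuous block :=
    continuous_const.mul ((continuous_rade _).mul (continuous_fejerSum _))
  have norm_coeff : ‖c (hi n)‖ₑ = n * ‖c (hi n) / n‖ₑ := by
    rw [← Real.enorm_natCast, ← enorm_mul, mul_div_cancel₀ _ (Nat.cast_ne_zero.2 hn)]
  calc ‖c (hi n)‖ₑ * LpN (1 / 2) (fejerSum (n % 2 ^ hi n)) = n * LpN (1 / 2) block := by
        rw [LpN_const_mul half_pos, LpN_rade_mul, norm_coeff, mul_assoc]
    _ = n * LpN (1 / 2) (σ F n - (σ F n - block)) := by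
        rw [sub_sub_cancel (σ F n) block]
    _ ≤ n * (2 * (LpN (1 / 2) (σ F n) + LpN (1 / 2) (σ F n - block))) := by
        gcongr
        exact LpN_half_sub_le (continuous_σ F n) ((continuous_σ F n).sub continuous_block)
    _ ≤ _ := by
        gcongr
        exact LpN_le_of_abs_le half_pos (abs_σ_walshMart_sub_le c hn)

lemma enorm_mul_sq_V_le (c : ℕ → ℝ) {n : ℕ} (hn : n ≠ 0) :
    ‖c (hi n)‖ₑ * (V n : ℝ≥0∞) ^ 2 ≤
      1024 * n * (LpN (1 / 2) (σ (walshMart (blockCoeff c)) n) +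
        ENNReal.ofReal (∑ M ∈ Finset.range (hi n), 2 ^ M * |c M|)) + 32 * ‖c (hi n)‖ₑ := by
  calc ‖c (hi n)‖ₑ * (V n : ℝ≥0∞) ^ 2
      ≤ ‖c (hi n)‖ₑ * (512 * LpN (1 / 2) (fejerSum (n % 2 ^ hi n)) + 32) := by
        gcongr
        exact sq_V_le_LpN_fejerSum n
    _ = 512 * (‖c (hi n)‖ₑ * LpN (1 / 2) (fejerSum (n % 2 ^ hi n))) + 32 * ‖c (hi n)‖ₑ := by ring
    _ ≤ 512 * (n * (2 * (LpN (1 / 2) (σ (walshMart (blockCoeff c)) n) +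
          ENNReal.ofReal (∑ M ∈ Finset.range (hi n), 2 ^ M * |c M|)))) + 32 * ‖c (hi n)‖ₑ := by
        gcongr ?_ + _
        exact mul_le_mul_right (enorm_mul_LpN_fejerSum_le c hn) _
    _ = _ := by ring

lemma enorm_mul_sq_V_div_le (c : ℕ → ℝ) {n : ℕ} (hn : n ≠ 0) {φ : ℝ} (hφ : 1 ≤ φ) :
    ‖c (hi n)‖ₑ * (‖φ⁻¹‖ₑ * (V n : ℝ≥0∞) ^ 2) ≤
      1024 * n * (LpN (1 / 2) (fun x => σ (walshMart (blockCoeff c)) n x / φ) +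
        ENNReal.ofReal (∑ M ∈ Finset.range (hi n), 2 ^ M * |c M|)) + 32 * ‖c (hi n)‖ₑ := by
  set B := ENNReal.ofReal (∑ M ∈ Finset.range (hi n), 2 ^ M * |c M|)
  have hφ' : ‖φ⁻¹‖ₑ ≤ 1 := by
    rw [Real.enorm_eq_ofReal (by positivity), ENNReal.ofReal_le_one]
    exact inv_le_one_of_one_le₀ hφ
  have scale : LpN (1 / 2) (fun x => σ (walshMart (blockCoeff c)) n x / φ) =
      ‖φ⁻¹‖ₑ * LpN (1 / 2) (σ (walshMart (blockCoeff c)) n) := by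
    simp only [div_eq_inv_mul (_ : ℝ) φ]
    exact LpN_const_mul (by norm_num) _ _
  calc ‖c (hi n)‖ₑ * (‖φ⁻¹‖ₑ * (V n : ℝ≥0∞) ^ 2) = ‖φ⁻¹‖ₑ * (‖c (hi n)‖ₑ * (V n : ℝ≥0∞) ^ 2) :=
        mul_left_comm _ _ _
    _ ≤ ‖φ⁻¹‖ₑ * (1024 * n * (LpN (1 / 2) (σ (walshMart (blockCoeff c)) n) + B) +
          32 * ‖c (hi n)‖ₑ) := by
        gcongr
        exact enorm_mul_sq_V_le c hn
    _ = 1024 * n * (LpN (1 / 2) (fun x => σ (walshMart (blockCoeff c)) n x / φ) + ‖φ⁻¹‖ₑ * B) +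
          ‖φ⁻¹‖ₑ * (32 * ‖c (hi n)‖ₑ) := by rw [scale]; ring
    _ ≤ _ := by
        gcongr ?_ * (_ + ?_) + ?_
        exacts [le_rfl, mul_le_of_le_one_left' hφ', mul_le_of_le_one_left' hφ']

lemma ofReal_le_LpN_σ_div (c : ℕ → ℝ) {n : ℕ} (hn : n ≠ 0) {φ L : ℝ} (hφ : 1 ≤ φ)
    (h : 1024 * n * (L + ∑ M ∈ Finset.range (hi n), 2 ^ M * |c M|) + 32 * |c (hi n)| ≤
      |c (hi n)| * ((V n : ℝ) ^ 2 / φ)) :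
    ENNReal.ofReal L ≤ LpN (1 / 2) (fun x => σ (walshMart (blockCoeff c)) n x / φ) := by
  have norm_le := enorm_mul_sq_V_div_le c hn hφ
  set B := ∑ M ∈ Finset.range (hi n), 2 ^ M * |c M|
  have hB : 0 ≤ B := Finset.sum_nonneg fun M _ => by positivity
  have hn' : (0 : ℝ) < n := by positivity
  by_contra! small
  lift LpN (1 / 2) (fun x => σ (walshMart (blockCoeff c)) n x / φ) to ℝ≥0
    using small.ne_top with l
  rw [ENNReal.lt_ofReal_iff_toReal_lt coe_ne_top, ENNReal.coe_toReal] at small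
  have real_norm_le :
      |c (hi n)| * (φ⁻¹ * (V n : ℝ) ^ 2) ≤ 1024 * n * (l + B) + 32 * |c (hi n)| := by
    have := ENNReal.toReal_mono (by finiteness) norm_le
    rw [ENNReal.toReal_add (by finiteness) (by finiteness)] at this
    simpa [ENNReal.toReal_add coe_ne_top ofReal_ne_top, ENNReal.toReal_ofReal hB,
      abs_of_nonneg (zero_le_one.trans hφ)] using this
  have : 1024 * n * (l + B) < 1024 * n * (L + B) := by gcongr
  rw [div_eq_inv_mul] at h
  linarith

/-! ### The gliding hump -/

lemma V_le (n : ℕ) : V n ≤ n + 2 := by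
  have head : (if n.testBit 0 then 1 else 0) ≤ 1 := by split_ifs <;> simp
  have tail : ∑ k ∈ Finset.Icc 1 (n + 1),
      (if n.testBit k ≠ n.testBit (k - 1) then 1 else 0) ≤ n + 1 := by
    rw [← Finset.card_filter]
    simpa using Finset.card_filter_le (Finset.Icc 1 (n + 1)) _
  rw [V]
  omega

lemma exists_lt_hi_and_le_sq_V_div {ι : Type*} {n : ι → ℕ} {φ : ι → ℝ} (hφ : ∀ i, 1 ≤ φ i)
    (h : ∀ C : ℝ, ∃ i, C ≤ (V (n i) : ℝ) ^ 2 / φ i) (P : ℕ) (C : ℝ) :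
    ∃ i, P < hi (n i) ∧ C ≤ (V (n i) : ℝ) ^ 2 / φ i := by
  obtain ⟨i, hi_large⟩ := h (max C ((2 ^ (P + 1) + 2) ^ 2))
  refine ⟨i, ?_, (le_max_left _ _).trans hi_large⟩
  by_contra! hP
  have hn : n i < 2 ^ (P + 1) :=
    (lt_two_pow_hi_succ _).trans_le (Nat.pow_le_pow_right two_pos (by omega))
  have hV : (V (n i) : ℝ) < 2 ^ (P + 1) + 2 := by
    exact_mod_cast (V_le (n i)).trans_lt (Nat.add_lt_add_right hn 2)
  have := (le_max_right _ _).trans (hi_large.trans (div_le_self (sq_nonneg _) (hφ i)))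
  exact this.not_gt (pow_lt_pow_left₀ hV (by positivity) two_ne_zero)

lemma exists_seq_lt_and_le {ι : Type*} {a : ι → ℕ} {R : ι → ℝ}
    (h : ∀ (P : ℕ) (C : ℝ), ∃ j, P < a j ∧ C ≤ R j) (θ : ℕ → ℕ → ℝ) :
    ∃ k : ℕ → ι, ∀ i, a (k i) < a (k (i + 1)) ∧ θ i (a (k i)) ≤ R (k (i + 1)) := by
  choose next next_gt le_next using h
  let k : ℕ → ι := Nat.rec (next 0 0) fun i j => next (a j) (θ i (a j))
  exact ⟨k, fun i => ⟨next_gt _ _, le_next _ _⟩⟩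

/-- The heights `2 ^ N i / 4 ^ i` of the humps, placed at the scales `N i`: a block of height `c` at
the scale `N` contributes `(c / 2 ^ N) ^ (1 / 2)` to the integral bounding the `H_{1/2}` norm, so
these contributions form the geometric series `∑ 2⁻ⁱ`. -/
def humpCoeff (N : ℕ → ℕ) : ℕ → ℝ := Function.extend N (fun i => 2 ^ N i / 4 ^ i) 0

section humpCoeff

variable {N : ℕ → ℕ} (hN : StrictMono N)
include hN

lemma humpCoeff_apply (i : ℕ) : humpCoeff N (N i) = 2 ^ N i / 4 ^ i :=
  hN.injective.extend_apply _ _ i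

lemma abs_humpCoeff_le (M : ℕ) : |humpCoeff N M| ≤ 2 ^ M := by
  by_cases hM : ∃ i, N i = M
  · obtain ⟨i, rfl⟩ := hM
    rw [humpCoeff_apply hN, abs_of_nonneg (by positivity)]
    exact div_le_self (by positivity) (one_le_pow₀ (by norm_num))
  · rw [humpCoeff, Function.extend_apply' _ _ _ hM]
    simp

lemma humpCoeff_eq_zero {i M : ℕ} (h : N i < M) (h' : M < N (i + 1)) : humpCoeff N M = 0 := by
  refine Function.extend_apply' _ _ _ ?_
  rintro ⟨j, rfl⟩
  have := hN.lt_iff_lt.1 h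
  have := hN.lt_iff_lt.1 h'
  omega

lemma sum_two_pow_mul_abs_humpCoeff_le (i : ℕ) :
    ∑ M ∈ Finset.range (N (i + 1)), 2 ^ M * |humpCoeff N M| ≤ (N i + 1) * 4 ^ N i :=
  calc ∑ M ∈ Finset.range (N (i + 1)), 2 ^ M * |humpCoeff N M|
      = ∑ M ∈ Finset.range (N i + 1), 2 ^ M * |humpCoeff N M| := by
        refine (Finset.sum_subset (Finset.range_mono (hN i.lt_succ_self)) fun M hM hM' => ?_).symm
        rw [humpCoeff_eq_zero hN (by simpa using hM') (Finset.mem_range.1 hM), abs_zero, mul_zero]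
    _ ≤ ∑ _M ∈ Finset.range (N i + 1), (4 : ℝ) ^ N i := by
        refine Finset.sum_le_sum fun M hM => ?_
        calc (2 : ℝ) ^ M * |humpCoeff N M| ≤ 2 ^ M * 2 ^ M := by
              gcongr
              exact abs_humpCoeff_le hN M
          _ = 4 ^ M := by rw [← mul_pow]; norm_num
          _ ≤ 4 ^ N i := by
              gcongr
              exacts [by norm_num, Nat.lt_succ_iff.1 (Finset.mem_range.1 hM)]
    _ = _ := by simp

lemma memHp_humpCoeff : MemHp (1 / 2) (walshMart (blockCoeff (humpCoeff N))) := by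
  refine memHp_walshMart_blockCoeff (by norm_num) (by norm_num) ?_
  have hsupp : (Function.support fun M => (‖humpCoeff N M‖ₑ * 2 ^ M) ^ (1 / 2 : ℝ) * 2⁻¹ ^ M) ⊆
      Set.range N := by
    refine Function.support_subset_iff'.2 fun M hM => ?_
    rw [humpCoeff, Function.extend_apply' _ _ _ hM]
    simp
  have hterm (i : ℕ) :
      (‖humpCoeff N (N i)‖ₑ * 2 ^ N i) ^ (1 / 2 : ℝ) * 2⁻¹ ^ N i = (2⁻¹ : ℝ≥0∞) ^ i := by
    have square : ‖humpCoeff N (N i)‖ₑ * 2 ^ N i = ((2 : ℝ≥0∞) ^ N i * 2⁻¹ ^ i) ^ (2 : ℝ) := by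
      rw [humpCoeff_apply hN, Real.enorm_eq_ofReal (by positivity),
        ENNReal.ofReal_div_of_pos (by positivity), ENNReal.ofReal_pow zero_le_two,
        ENNReal.ofReal_pow four_pos.le, ENNReal.ofReal_ofNat, ENNReal.ofReal_ofNat,
        ENNReal.rpow_two, div_eq_mul_inv, ENNReal.inv_pow,
        show (4 : ℝ≥0∞) = 2 ^ 2 by norm_num, ENNReal.inv_pow]
      ring
    rw [square, one_div, ENNReal.rpow_rpow_inv two_ne_zero, mul_right_comm, ← mul_pow,
      ENNReal.mul_inv_cancel two_ne_zero ofNat_ne_top, one_pow, one_mul]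
  rw [← hN.injective.tsum_eq hsupp]
  simp_rw [hterm, ENNReal.tsum_geometric]
  simp

lemma ofReal_le_LpN_σ_humpCoeff {n i : ℕ} (hn : hi n = N (i + 1)) {φ : ℝ} (hφ : 1 ≤ φ)
    (h : 2048 * 4 ^ (i + 1) * (i + (N i + 1) * 4 ^ N i) + 32 ≤ (V n : ℝ) ^ 2 / φ) :
    (i : ℝ≥0∞) ≤ LpN (1 / 2) (fun x => σ (walshMart (blockCoeff (humpCoeff N))) n x / φ) := by
  have hn0 : n ≠ 0 := by
    rintro rfl
    have hpos : 0 < N (i + 1) := (Nat.zero_le _).trans_lt (hN i.lt_succ_self)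
    exact hpos.ne (by simpa [hi] using hn)
  rw [← ENNReal.ofReal_natCast]
  refine ofReal_le_LpN_σ_div _ hn0 hφ ?_
  have hlt : (n : ℝ) ≤ 2 ^ N (i + 1) * 2 := by
    rw [← hn, ← pow_succ]
    exact_mod_cast (lt_two_pow_hi_succ n).le
  rw [hn, humpCoeff_apply hN, abs_of_nonneg (by positivity)]
  calc 1024 * n * (i + ∑ M ∈ Finset.range (N (i + 1)), 2 ^ M * |humpCoeff N M|) +
        32 * (2 ^ N (i + 1) / 4 ^ (i + 1))
      ≤ 1024 * (2 ^ N (i + 1) * 2) * (i + (N i + 1) * 4 ^ N i) +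
        32 * (2 ^ N (i + 1) / 4 ^ (i + 1)) := by
        gcongr
        exact sum_two_pow_mul_abs_humpCoeff_le hN i
    _ = 2 ^ N (i + 1) / 4 ^ (i + 1) *
          (2048 * 4 ^ (i + 1) * (i + (N i + 1) * 4 ^ N i) + 32) := by
        field_simp
        ring
    _ ≤ _ := by gcongr

end humpCoeff

theorem fejer_divergence_half_general {ι : Type*} (n : ι → ℕ) (φ : ι → ℝ) (hφ : ∀ i, 1 ≤ φ i)
    (h : ∀ C : ℝ, ∃ i, C ≤ (V (n i) : ℝ) ^ 2 / φ i) :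
    ∃ F : ℕ → G → ℝ, MemHp (1 / 2) F ∧
      (⨆ i, LpN (1 / 2) (fun x => σ F (n i) x / φ i)) = ⊤ := by
  obtain ⟨k, hk⟩ := exists_seq_lt_and_le (exists_lt_hi_and_le_sq_V_div hφ h)
    fun i P => 2048 * 4 ^ (i + 1) * (i + (P + 1) * 4 ^ P) + 32
  have lacunary : StrictMono fun i => hi (n (k i)) := strictMono_nat_of_lt_succ fun i => (hk i).1
  refine ⟨_, memHp_humpCoeff lacunary, top_unique ?_⟩
  rw [← ENNReal.iSup_natCast]
  exact iSup_le fun i => (ofReal_le_LpN_σ_humpCoeff lacunary rfl (hφ _) (hk i).2).trans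
    (le_iSup_of_le (k (i + 1)) le_rfl)

/-- divergence of `σ_{n_k}F/Φ(n_k)` in `L_{1/2}` for some `F ∈ H_{1/2}`
when `limsup V(n_k)²/Φ(n_k) = ∞`. -/
theorem fejer_divergence_half (nk : ℕ → ℕ) (hpos : ∀ k, 1 ≤ nk k)
    (hV : ∀ C : ℕ, ∃ k, C ≤ V (nk k))
    (Φ : ℕ → ℝ) (hΦ1 : ∀ n, 1 ≤ Φ n) (hΦmono : Monotone Φ)
    (hΦtop : Tendsto Φ atTop atTop)
    (hlimsup : ∀ C : ℝ, ∃ᶠ k in atTop, C ≤ (V (nk k) : ℝ) ^ 2 / Φ (nk k)) :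
    ∃ F : ℕ → G → ℝ, MemHp (1/2) F ∧
      (⨆ k, LpN (1/2) (fun x => σ F (nk k) x / Φ (nk k))) = ⊤ :=
  fejer_divergence_half_general nk (fun k => Φ (nk k)) (fun _ => hΦ1 _) fun C => (hlimsup C).exists
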